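/- Let M be a perfect matching of G (n even). Then there exists a set N of n/6 edges of G, none belonging to M, such that no edge of M contains an endpoint of more than one edge of N, and c(N) ≥ (1/4)·c(E_1) + (1/2)·c(E_2); moreover (1/4)·c(E_1) + (1/2)·c(E_2) = (1/4)·c(E(P*) ∖ M) + (1/4)·c(E_2). -/

import Mathlib

open Finset
open scoped Classical

namespace MW3PP

/-- A 3-path `xyz`: a path on three distinct vertices with middle vertex `y`. -/
structure P3 (V : Type*) where
  x : V
  y : V
  z : V
  hxy : x ≠ y
  hyz : y ≠ z
  hxz : x ≠ z

variable {V : Type*} [Fintype V] [DecidableEq V]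

/-- The vertex set of a 3-path. -/
def P3.verts (p : P3 V) : Finset V := {p.x, p.y, p.z}

/-- The two edges of a 3-path. -/
def P3.edges (p : P3 V) : Finset (Sym2 V) := {s(p.x, p.y), s(p.y, p.z)}

/-- The weight of a 3-path. -/
def P3.wt (w : Sym2 V → ℝ) (p : P3 V) : ℝ := w s(p.x, p.y) + w s(p.y, p.z)

/-- The total weight of a set of edges. -/
def ew (w : Sym2 V → ℝ) (F : Finset (Sym2 V)) : ℝ := ∑ e ∈ F, w e

/-- The total weight of a set of 3-paths. -/
def pw (w : Sym2 V → ℝ) (P : Finset (P3 V)) : ℝ := ∑ p ∈ P, p.wt w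

/-- `∑_{xyz ∈ S} max (w (xy)) (w (yz))`. -/
def maxSum (w : Sym2 V → ℝ) (S : Finset (P3 V)) : ℝ :=
  ∑ p ∈ S, max (w s(p.x, p.y)) (w s(p.y, p.z))

/-- A perfect 3-path packing: `n/3` pairwise vertex-disjoint 3-paths covering all vertices. -/
def IsPacking (P : Finset (P3 V)) : Prop :=
  P.card = Fintype.card V / 3 ∧
  (∀ p ∈ P, ∀ q ∈ P, p ≠ q → Disjoint p.verts q.verts) ∧
  (∀ v : V, ∃ p ∈ P, v ∈ p.verts)

/-- A maximum-weight perfect 3-path packing. -/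
def IsMaxPacking (w : Sym2 V → ℝ) (P : Finset (P3 V)) : Prop :=
  IsPacking P ∧ ∀ Q : Finset (P3 V), IsPacking Q → pw w Q ≤ pw w P

/-- A matching: a set of pairwise vertex-disjoint (non-loop) edges. -/
def IsMatching (M : Finset (Sym2 V)) : Prop :=
  (∀ e ∈ M, ¬ e.IsDiag) ∧
  ∀ e ∈ M, ∀ f ∈ M, e ≠ f → ∀ v : V, v ∈ e → v ∉ f

/-- A maximum-weight matching among all matchings of size `k`. -/
def IsMaxMatchingOfSize (w : Sym2 V → ℝ) (k : ℕ) (M : Finset (Sym2 V)) : Prop :=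
  IsMatching M ∧ M.card = k ∧
  ∀ M' : Finset (Sym2 V), IsMatching M' → M'.card = k → ew w M' ≤ ew w M

/-- `v ∈ V(M)` : vertex `v` is covered by the matching `M`. -/
def covered (M : Finset (Sym2 V)) (v : V) : Prop := ∃ e ∈ M, v ∈ e

/-- `e_u` : the edge of `M` containing `u` (junk value if there is none). -/
noncomputable def eMatch (M : Finset (Sym2 V)) (u : V) : Sym2 V :=
  if h : ∃ e ∈ M, u ∈ e then h.choose else s(u, u)

/-- The cost `c` of an edge with respect to a matching `M`:
`c(uv) = w(uv) - min (w (e_u)) (w (e_v))` if both endpoints are covered by `M`,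
and `c(uv) = w(uv)` otherwise. -/
noncomputable def cost (w : Sym2 V → ℝ) (M : Finset (Sym2 V)) : Sym2 V → ℝ :=
  Sym2.lift ⟨fun u v =>
    if covered M u ∧ covered M v then
      w s(u, v) - min (w (eMatch M u)) (w (eMatch M v))
    else w s(u, v), by
      intro u v
      dsimp only
      by_cases h : covered M u ∧ covered M v
      · rw [if_pos h, if_pos (show covered M v ∧ covered M u from ⟨h.2, h.1⟩),
          Sym2.eq_swap, min_comm]
      · rw [if_neg h, if_neg (show ¬(covered M v ∧ covered M u) from fun h' => h ⟨h'.2, h'.1⟩),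
          Sym2.eq_swap]⟩

/-- The total cost of a set of edges. -/
noncomputable def cw (w : Sym2 V → ℝ) (M F : Finset (Sym2 V)) : ℝ := ∑ e ∈ F, cost w M e

/-- The number of vertices of the 3-path `p` covered by `M`. -/
noncomputable def kcnt (M : Finset (Sym2 V)) (p : P3 V) : ℕ :=
  (p.verts.filter fun v => covered M v).card

/-- Exactly one of the two edges of `p` lies in `M`. -/
def exOne (M : Finset (Sym2 V)) (p : P3 V) : Prop :=
  (s(p.x, p.y) ∈ M ∧ s(p.y, p.z) ∉ M) ∨ (s(p.x, p.y) ∉ M ∧ s(p.y, p.z) ∈ M)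

def cls1 (M : Finset (Sym2 V)) (p : P3 V) : Prop := kcnt M p = 0
def cls2 (M : Finset (Sym2 V)) (p : P3 V) : Prop := kcnt M p = 1 ∧ ¬ covered M p.y
def cls3 (M : Finset (Sym2 V)) (p : P3 V) : Prop := kcnt M p = 1 ∧ covered M p.y
def cls4 (M : Finset (Sym2 V)) (p : P3 V) : Prop := kcnt M p = 2 ∧ ¬ covered M p.y
def cls5 (M : Finset (Sym2 V)) (p : P3 V) : Prop := kcnt M p = 2 ∧ covered M p.y ∧ exOne M p
def cls6 (M : Finset (Sym2 V)) (p : P3 V) : Prop :=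
  kcnt M p = 2 ∧ covered M p.y ∧ s(p.x, p.y) ∉ M ∧ s(p.y, p.z) ∉ M
def cls7 (M : Finset (Sym2 V)) (p : P3 V) : Prop := kcnt M p = 3 ∧ exOne M p
def cls8 (M : Finset (Sym2 V)) (p : P3 V) : Prop :=
  kcnt M p = 3 ∧ s(p.x, p.y) ∉ M ∧ s(p.y, p.z) ∉ M

/-- The subset of a set of 3-paths satisfying a predicate. -/
noncomputable def psel (P : Finset (P3 V)) (c : P3 V → Prop) : Finset (P3 V) := P.filter c

/-- The set of all edges of the 3-paths in `S`. -/
def Esub (S : Finset (P3 V)) : Finset (Sym2 V) := S.biUnion P3.edges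

/-- The heaviest edge of a 3-path (the edge `xy` in case of a tie). -/
noncomputable def heavy (w : Sym2 V → ℝ) (p : P3 V) : Sym2 V :=
  if w s(p.y, p.z) ≤ w s(p.x, p.y) then s(p.x, p.y) else s(p.y, p.z)

noncomputable def X1 (w : Sym2 V → ℝ) (P : Finset (P3 V)) (M : Finset (Sym2 V)) :
    Finset (Sym2 V) := (psel P (cls1 M)).image (heavy w)
noncomputable def X2 (P : Finset (P3 V)) (M : Finset (Sym2 V)) : Finset (Sym2 V) :=
  (psel P (cls2 M)).image fun p => if covered M p.x then s(p.x, p.y) else s(p.y, p.z)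
noncomputable def X3 (w : Sym2 V → ℝ) (P : Finset (P3 V)) (M : Finset (Sym2 V)) :
    Finset (Sym2 V) := (psel P (cls3 M)).image (heavy w)
noncomputable def X4 (w : Sym2 V → ℝ) (P : Finset (P3 V)) (M : Finset (Sym2 V)) :
    Finset (Sym2 V) := (psel P (cls4 M)).image (heavy w)
noncomputable def X5 (P : Finset (P3 V)) (M : Finset (Sym2 V)) : Finset (Sym2 V) :=
  (psel P (cls5 M)).image fun p => if s(p.x, p.y) ∈ M then s(p.y, p.z) else s(p.x, p.y)
noncomputable def X6 (P : Finset (P3 V)) (M : Finset (Sym2 V)) : Finset (Sym2 V) :=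
  (psel P (cls6 M)).image fun p => if covered M p.x then s(p.y, p.z) else s(p.x, p.y)
noncomputable def X7 (P : Finset (P3 V)) (M : Finset (Sym2 V)) : Finset (Sym2 V) :=
  (psel P (cls7 M)).image fun p => if s(p.x, p.y) ∈ M then s(p.y, p.z) else s(p.x, p.y)
noncomputable def X8 (w : Sym2 V → ℝ) (P : Finset (P3 V)) (M : Finset (Sym2 V)) :
    Finset (Sym2 V) := (psel P (cls8 M)).image (heavy w)

noncomputable def Y1 (w : Sym2 V → ℝ) (P : Finset (P3 V)) (M : Finset (Sym2 V)) :
    Finset (Sym2 V) := Esub (psel P (cls1 M)) \ X1 w P M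
noncomputable def Y2 (P : Finset (P3 V)) (M : Finset (Sym2 V)) : Finset (Sym2 V) :=
  Esub (psel P (cls2 M)) \ X2 P M
noncomputable def Y3 (w : Sym2 V → ℝ) (P : Finset (P3 V)) (M : Finset (Sym2 V)) :
    Finset (Sym2 V) := Esub (psel P (cls3 M)) \ X3 w P M
noncomputable def Y4 (w : Sym2 V → ℝ) (P : Finset (P3 V)) (M : Finset (Sym2 V)) :
    Finset (Sym2 V) := Esub (psel P (cls4 M)) \ X4 w P M
noncomputable def Y5 (P : Finset (P3 V)) (M : Finset (Sym2 V)) : Finset (Sym2 V) :=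
  Esub (psel P (cls5 M)) \ X5 P M
noncomputable def Y6 (P : Finset (P3 V)) (M : Finset (Sym2 V)) : Finset (Sym2 V) :=
  Esub (psel P (cls6 M)) \ X6 P M
noncomputable def Y7 (P : Finset (P3 V)) (M : Finset (Sym2 V)) : Finset (Sym2 V) :=
  Esub (psel P (cls7 M)) \ X7 P M
noncomputable def Y8 (w : Sym2 V → ℝ) (P : Finset (P3 V)) (M : Finset (Sym2 V)) :
    Finset (Sym2 V) := Esub (psel P (cls8 M)) \ X8 w P M

/-- An edge is a middle edge (w.r.t. `M`) if exactly one of its endpoints lies in `V(M)`. -/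
def isMiddle (M : Finset (Sym2 V)) (e : Sym2 V) : Prop :=
  ∃ u v : V, e = s(u, v) ∧ covered M u ∧ ¬ covered M v

/-- Two edges share a vertex. -/
def shares (e f : Sym2 V) : Prop := ∃ v, v ∈ e ∧ v ∈ f

/-- `g` is a middle edge of some 3-path in `S`. -/
def middleIn (M : Finset (Sym2 V)) (S : Finset (P3 V)) (g : Sym2 V) : Prop :=
  (∃ p ∈ S, g ∈ p.edges) ∧ isMiddle M g

/-- The 3-paths of `P` lying in classes 2, 3 or 4. -/
noncomputable def P234 (P : Finset (P3 V)) (M : Finset (Sym2 V)) : Finset (P3 V) :=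
  psel P fun p => cls2 M p ∨ cls3 M p ∨ cls4 M p

/-- `M_1`: edges of `M` sharing a vertex with at least one middle edge of a 3-path of `P*_6`. -/
noncomputable def Mset1 (P : Finset (P3 V)) (M : Finset (Sym2 V)) : Finset (Sym2 V) :=
  M.filter fun f => ∃ g, middleIn M (psel P (cls6 M)) g ∧ shares f g

/-- `M_2`: edges of `M` sharing a vertex with at least one middle edge, all middle edges met
belonging to 3-paths of `P*_2 ∪ P*_3 ∪ P*_4`. -/
noncomputable def Mset2 (P : Finset (P3 V)) (M : Finset (Sym2 V)) : Finset (Sym2 V) :=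
  M.filter fun f =>
    (∃ g, middleIn M P g ∧ shares f g) ∧
    ∀ g, middleIn M P g → shares f g → middleIn M (P234 P M) g

/-- `M_3 = M ∩ E(P*_7)`. -/
noncomputable def Mset3 (P : Finset (P3 V)) (M : Finset (Sym2 V)) : Finset (Sym2 V) :=
  M ∩ Esub (psel P (cls7 M))

/-- `M_4 = M ∩ E(P*_5)`. -/
noncomputable def Mset4 (P : Finset (P3 V)) (M : Finset (Sym2 V)) : Finset (Sym2 V) :=
  M ∩ Esub (psel P (cls5 M))

/-- The middle edges of 3-paths of `P*_6`. -/
noncomputable def mid6 (P : Finset (P3 V)) (M : Finset (Sym2 V)) : Finset (Sym2 V) :=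
  (Esub (psel P (cls6 M))).filter (isMiddle M)

/-- `M'_1`: edges of `M_1` meeting exactly one middle edge of a 3-path of `P*_6` and
no middle edge of a 3-path of `P*_2 ∪ P*_3 ∪ P*_4`. -/
noncomputable def Mset1' (P : Finset (P3 V)) (M : Finset (Sym2 V)) : Finset (Sym2 V) :=
  (Mset1 P M).filter fun f =>
    ((mid6 P M).filter fun g => shares f g).card = 1 ∧
    ∀ g, middleIn M (P234 P M) g → ¬ shares f g

/-- `M''_1`: edges of `M_1` meeting two middle edges of 3-paths of `P*_6`. -/
noncomputable def Mset1'' (P : Finset (P3 V)) (M : Finset (Sym2 V)) : Finset (Sym2 V) :=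
  (Mset1 P M).filter fun f => ((mid6 P M).filter fun g => shares f g).card = 2

/-- `M'''_1`: edges of `M_1` meeting exactly one middle edge of a 3-path of `P*_6` and
at least one middle edge of a 3-path of `P*_2 ∪ P*_3 ∪ P*_4`. -/
noncomputable def Mset1''' (P : Finset (P3 V)) (M : Finset (Sym2 V)) : Finset (Sym2 V) :=
  (Mset1 P M).filter fun f =>
    ((mid6 P M).filter fun g => shares f g).card = 1 ∧
    ∃ g, middleIn M (P234 P M) g ∧ shares f g

/-- Assumption on `P*`: for every 3-path `xyz ∈ P*` with `y ∉ V(M)` and `x, z ∈ V(M)`,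
the vertices `x` and `z` lie in two distinct edges of `M`. -/
def Ass (P : Finset (P3 V)) (M : Finset (Sym2 V)) : Prop :=
  ∀ p ∈ P, ¬ covered M p.y → covered M p.x → covered M p.z →
    ∃ e ∈ M, ∃ f ∈ M, p.x ∈ e ∧ p.z ∈ f ∧ e ≠ f

/-- An admissible edge w.r.t. `M`: either both endpoints are in `V(M)` and lie in two distinct
edges of `M`, or exactly one endpoint is in `V(M)`. -/
def goodEdge (M : Finset (Sym2 V)) (e : Sym2 V) : Prop :=
  (∃ u v : V, e = s(u, v) ∧ covered M u ∧ covered M v ∧ ∀ f ∈ M, ¬(u ∈ f ∧ v ∈ f)) ∨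
  (∃ u v : V, e = s(u, v) ∧ covered M u ∧ ¬ covered M v)

/-
Select one edge outside `M` from each 3-path. The selected edges are disjoint, so together with
`M` they form alternating paths and cycles. If there are no cycles, listing the selected edges
along the paths and taking every other one splits them into two halves of size `n / 6`, in neither
of which an edge of `M` meets two edges.

When a 3-path has two edges outside `M`, either may be selected. Switching the selection on a cycle
turns this cycle into an alternating path. Hence, if the number of selected edges on cycles, counted
both for a selection and for the opposite one, is as small as possible, neither of the two has a
cycle. The two halves of both selections contain every edge of `E_1` once and every edge of `E_2`
twice, so the best of the four has at least the average cost.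
-/

section AlternatingCycles

variable {ι α : Type*} {mate : α → α} {e e' : ι → Sym2 α}

/-- The edges `a` and `b` are not joined by an edge `{v, mate v}` of the matching. -/
def MateApart (mate : α → α) (a b : Sym2 α) : Prop := ∀ v ∈ a, mate v ∉ b

/-- The edges `e i` with `i ∈ S` form alternating cycles with the edges `{v, mate v}` of the
matching. Closure under `mate` expresses this, provided the edges `e i` are disjoint. -/
def MateClosed (mate : α → α) (e : ι → Sym2 α) (S : Finset ι) : Prop :=
  ∀ i ∈ S, ∀ v ∈ e i, ∃ j ∈ S, mate v ∈ e j

/-- The edges `e i` form no alternating cycle with the matching. -/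
def AlternatingAcyclic (mate : α → α) (e : ι → Sym2 α) : Prop :=
  ∀ S : Finset ι, MateClosed mate e S → S = ∅

/-- The edge `e i` is the last edge outside the matching on an alternating path formed by the
edges indexed by `T`. -/
def IsLeaf (mate : α → α) (e : ι → Sym2 α) (T : Finset ι) (i : ι) : Prop :=
  i ∈ T ∧ ∃ v ∈ e i, ∀ j ∈ T, mate v ∉ e j

theorem MateApart.symm (hmate : Function.Involutive mate) {a b : Sym2 α}
    (h : MateApart mate a b) : MateApart mate b a :=
  fun v hv hva => h (mate v) hva (by rwa [hmate v])

theorem MateClosed.congr {S : Finset ι} (hS : MateClosed mate e S) (h : ∀ i ∈ S, e i = e' i) :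
    MateClosed mate e' S := by
  intro i hi v hv
  obtain ⟨j, hj, hvj⟩ := hS i hi v (by rwa [h i hi])
  exact ⟨j, hj, by rwa [← h j hj]⟩

theorem AlternatingAcyclic.exists_isLeaf (he : AlternatingAcyclic mate e) {T : Finset ι}
    (hT : T.Nonempty) : ∃ i, IsLeaf mate e T i := by
  by_contra! h
  refine hT.ne_empty (he T fun i hi v hv => ?_)
  by_contra! hv'
  exact h i ⟨hi, v, hv, hv'⟩

section Splitting

variable [DecidableEq ι]

theorem IsLeaf.exists_isLeaf_erase (hmate : Function.Involutive mate)
    (hdisj : ∀ ⦃i j v⦄, v ∈ e i → v ∈ e j → i = j) (he : AlternatingAcyclic mate e)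
    {T : Finset ι} {i : ι} (hi : IsLeaf mate e T i) (hT : (T.erase i).Nonempty) :
    ∃ r, IsLeaf mate e (T.erase i) r ∧ ∀ j ∈ T.erase i, j ≠ r → MateApart mate (e i) (e j) := by
  obtain ⟨-, v, hv, hvT⟩ := hi
  by_cases h : ∀ j ∈ T.erase i, MateApart mate (e i) (e j)
  · obtain ⟨r, hr⟩ := he.exists_isLeaf hT
    exact ⟨r, hr, fun j hj _ => h j hj⟩
  simp only [MateApart] at h
  push Not at h
  obtain ⟨r, hr, u, hu, hur⟩ := h
  refine ⟨r, ⟨hr, mate u, hur, fun j hj huj => ?_⟩, fun j hj hjr u' hu' huj => hjr ?_⟩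
  · rw [hmate u] at huj
    exact ne_of_mem_erase hj (hdisj huj hu)
  · have hne : ∀ {x k}, k ∈ T.erase i → mate x ∈ e k → v ≠ x := by
      rintro x k hk hxk rfl
      exact hvT k (mem_of_mem_erase hk) hxk
    have hends : e i = s(v, u) := (Sym2.mem_and_mem_iff (hne hr hur)).1 ⟨hv, hu⟩
    have huu : u' = u := (Sym2.mem_iff.1 (hends ▸ hu')).resolve_left (hne hj huj).symm
    exact hdisj huj (huu ▸ hur)

theorem IsLeaf.exists_split (hmate : Function.Involutive mate)
    (hdisj : ∀ ⦃i j v⦄, v ∈ e i → v ∈ e j → i = j) (he : AlternatingAcyclic mate e)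
    {T : Finset ι} {i : ι} (hi : IsLeaf mate e T i) :
    ∃ F ⊆ T, i ∈ F ∧ #F = (#T + 1) / 2 ∧
      (F : Set ι).Pairwise (fun j k => MateApart mate (e j) (e k)) ∧
      ((T \ F : Finset ι) : Set ι).Pairwise fun j k => MateApart mate (e j) (e k) := by
  induction T using Finset.strongInduction generalizing i with
  | H T ih =>
    have hiT : i ∈ T := hi.1
    rcases (T.erase i).eq_empty_or_nonempty with hempty | hne
    · obtain rfl : T = {i} := by rw [← insert_erase hiT, hempty]; rfl
      exact ⟨{i}, Subset.rfl, mem_singleton_self i, by simp, by simp, by simp⟩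
    obtain ⟨r, hr, hapart⟩ := hi.exists_isLeaf_erase hmate hdisj he hne
    obtain ⟨F, hF, hrF, hcard, hF₁, hF₂⟩ := ih _ (erase_ssubset hiT) hr
    have hFT : F ⊆ T := hF.trans (erase_subset i T)
    have hiF : i ∉ F := fun h => notMem_erase i T (hF h)
    have hins : T \ F = insert i (T.erase i \ F) := by
      rw [← insert_sdiff_of_notMem _ hiF, insert_erase hiT]
    refine ⟨T \ F, sdiff_subset, mem_sdiff.2 ⟨hiT, hiF⟩, ?_, ?_, ?_⟩
    · have := card_pos.2 ⟨i, hiT⟩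
      rw [card_erase_of_mem hiT] at hcard
      rw [card_sdiff_of_subset hFT]
      omega
    · rw [hins, coe_insert]
      refine hF₂.insert fun j hj _ => ?_
      obtain ⟨hjT, hjF⟩ := mem_sdiff.1 (mem_coe.1 hj)
      have hij := hapart j hjT fun hjr => hjF (hjr ▸ hrF)
      exact ⟨hij, hij.symm hmate⟩
    · rwa [Finset.sdiff_sdiff_eq_self hFT]

end Splitting

theorem AlternatingAcyclic.exists_half [Fintype ι] (he : AlternatingAcyclic mate e)
    (hmate : Function.Involutive mate) (hdisj : ∀ ⦃i j v⦄, v ∈ e i → v ∈ e j → i = j)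
    {k : ℕ} (hcard : Fintype.card ι = 2 * k) (g : ι → ℝ) :
    ∃ S : Finset ι, #S = k ∧ (S : Set ι).Pairwise (fun i j => MateApart mate (e i) (e j)) ∧
      1 / 2 * ∑ i, g i ≤ ∑ i ∈ S, g i := by
  rcases isEmpty_or_nonempty ι with hι | hι
  · exact ⟨∅, by simp_all, by simp, by simp⟩
  obtain ⟨i, hi⟩ := he.exists_isLeaf univ_nonempty
  obtain ⟨F, -, -, hF, hF₁, hF₂⟩ := hi.exists_split hmate hdisj he
  rw [card_univ, hcard] at hF
  have hFk : #F = k := by omega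
  have hsum : ∑ i ∈ univ \ F, g i + ∑ i ∈ F, g i = ∑ i, g i := sum_sdiff (subset_univ F)
  rcases le_total (∑ i ∈ univ \ F, g i) (∑ i ∈ F, g i) with hle | hle
  · exact ⟨F, hFk, hF₁, by linarith⟩
  · refine ⟨univ \ F, ?_, hF₂, by linarith⟩
    rw [card_sdiff_of_subset (subset_univ F), card_univ]
    omega

theorem even_card_of_involutive (hmate : Function.Involutive mate) {W : Finset α}
    (hne : ∀ v ∈ W, mate v ≠ v) (hW : ∀ v ∈ W, mate v ∈ W) : Even #W := by
  have hsum : ∑ _v ∈ W, (1 : ZMod 2) = 0 :=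
    sum_involution (fun v _ => mate v) (fun _ _ => by decide) (fun v hv _ => hne v hv)
      (fun v hv => hW v hv) fun v _ => hmate v
  rw [sum_const, nsmul_eq_mul, mul_one] at hsum
  exact (ZMod.natCast_eq_zero_iff_even).1 hsum

theorem MateClosed.even_sum_card_inter [DecidableEq ι] [DecidableEq α]
    (hmate : Function.Involutive mate) (hne : ∀ i, ∀ v ∈ e i, mate v ≠ v)
    (hdisj : ∀ ⦃i j v⦄, v ∈ e i → v ∈ e' j → i = j) {S S' : Finset ι}
    (hS : MateClosed mate e S) (hS' : MateClosed mate e' S') :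
    Even (∑ i ∈ S ∩ S', #((e i).toFinset ∩ (e' i).toFinset)) := by
  have hpair : ((S ∩ S' : Finset ι) : Set ι).PairwiseDisjoint
      fun i => (e i).toFinset ∩ (e' i).toFinset := by
    intro i _ j _ hij
    refine disjoint_left.2 fun v hvi hvj => hij ?_
    simp only [mem_inter, Sym2.mem_toFinset] at hvi hvj
    exact hdisj hvi.1 hvj.2
  rw [← card_biUnion hpair]
  refine even_card_of_involutive hmate ?_ ?_ <;>
    simp only [mem_biUnion, mem_inter, Sym2.mem_toFinset]
  · rintro v ⟨i, -, hv, -⟩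
    exact hne i v hv
  · rintro v ⟨i, ⟨hi, hi'⟩, hv, hv'⟩
    obtain ⟨j, hj, hvj⟩ := hS i hi v hv
    obtain ⟨k, hk, hvk⟩ := hS' i hi' v hv'
    obtain rfl := hdisj hvj hvk
    exact ⟨j, ⟨hj, hk⟩, hvj, hvk⟩

variable [Fintype ι]

/-- The indices of the edges lying on an alternating cycle. -/
noncomputable def cyclicIndices (mate : α → α) (e : ι → Sym2 α) : Finset ι :=
  {i | ∃ S, MateClosed mate e S ∧ i ∈ S}

theorem mem_cyclicIndices {i : ι} :
    i ∈ cyclicIndices mate e ↔ ∃ S, MateClosed mate e S ∧ i ∈ S := by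
  simp only [cyclicIndices, mem_filter_univ]

theorem cyclicIndices_subset_of_eq_off {i : ι} (h : ∀ j ≠ i, e' j = e j)
    (hi : i ∉ cyclicIndices mate e') : cyclicIndices mate e' ⊆ cyclicIndices mate e := by
  intro j hj
  obtain ⟨S, hS, hjS⟩ := mem_cyclicIndices.1 hj
  refine mem_cyclicIndices.2 ⟨S, hS.congr fun k hk => h k ?_, hjS⟩
  rintro rfl
  exact hi (mem_cyclicIndices.2 ⟨S, hS, hk⟩)

end AlternatingCycles

section EdgeChoices

theorem exists_mem_notMem_of_ne {α : Type*} {a b : Sym2 α} (ha : ¬ a.IsDiag) (hne : a ≠ b) :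
    ∃ v ∈ a, v ∉ b := by
  by_contra! hsub
  have hx : a.out.1 ∈ a := a.out_fst_mem
  exact hne (Sym2.eq_of_ne_mem (Sym2.other_ne ha hx) (Sym2.other_mem hx) hx
    (hsub _ (Sym2.other_mem hx)) (hsub _ hx))

variable {ι α : Type*} {mate : α → α} {e : ι → Bool → Sym2 α}

/-- From each `i` one of the edges `e i true` and `e i false` is to be selected. These stand for
the edges of vertex-disjoint 3-paths outside the matching given by `mate`; they coincide
if only one edge of the 3-path lies outside the matching, and then the matching edge at one of their
endpoints has its other end on no edge that can be selected. -/
structure EdgeChoice (mate : α → α) (e : ι → Bool → Sym2 α) : Prop where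
  involutive : Function.Involutive mate
  not_isDiag : ∀ i s, ¬ (e i s).IsDiag
  mate_notMem : ∀ i s, ∀ v ∈ e i s, mate v ∉ e i s
  eq_of_mem : ∀ ⦃i j s t v⦄, v ∈ e i s → v ∈ e j t → i = j
  exists_common : ∀ i, ∃ v, ∀ s, v ∈ e i s
  exists_mate_notMem : ∀ i, e i true = e i false → ∃ v, (∀ s, v ∈ e i s) ∧ ∀ j s, mate v ∉ e j s

/-- The edges selected by `σ`. -/
def select (e : ι → Bool → Sym2 α) (σ : ι → Bool) (i : ι) : Sym2 α := e i (σ i)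

namespace EdgeChoice

theorem select_injective (h : EdgeChoice mate e) (σ : ι → Bool) :
    Function.Injective (select e σ) := by
  intro i j hij
  obtain ⟨v, hv⟩ := h.exists_common i
  have hvj : v ∈ select e σ j := hij ▸ (hv (σ i) : v ∈ select e σ i)
  exact h.eq_of_mem (hv (σ i)) hvj

theorem ne_of_mem_mateClosed (h : EdgeChoice mate e) {σ : ι → Bool} {S : Finset ι}
    (hS : MateClosed mate (select e σ) S) {i : ι} (hi : i ∈ S) {s t : Bool} (hst : s ≠ t) :
    e i s ≠ e i t := by
  intro heq
  obtain ⟨v, hv, hv'⟩ := h.exists_mate_notMem i (by cases s <;> cases t <;> simp_all)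
  obtain ⟨j, -, hvj⟩ := hS i hi v (hv (σ i))
  exact hv' j (σ j) hvj

theorem card_inter_eq_one [DecidableEq α] (h : EdgeChoice mate e) {i : ι} {s t : Bool}
    (hne : e i s ≠ e i t) : #((e i s).toFinset ∩ (e i t).toFinset) = 1 := by
  obtain ⟨v, hv⟩ := h.exists_common i
  refine card_eq_one.2 ⟨v, eq_singleton_iff_unique_mem.2 ⟨by simp [hv], fun u hu => ?_⟩⟩
  simp only [mem_inter, Sym2.mem_toFinset] at hu
  by_contra huv
  exact hne (Sym2.eq_of_ne_mem huv hu.1 (hv s) hu.2 (hv t))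

-- Otherwise the vertices common to the cycles before and after the switch would form a
-- `mate`-closed set, but their number is odd: one on the switched 3-path, two on each other one.
theorem notMem_of_mateClosed_switch (h : EdgeChoice mate e) {σ τ : ι → Bool} {i : ι}
    (hτ : ∀ j ≠ i, τ j = σ j) (hτi : τ i ≠ σ i) {S S' : Finset ι}
    (hS : MateClosed mate (select e σ) S) (hS' : MateClosed mate (select e τ) S') (hi : i ∈ S) :
    i ∉ S' := by
  classical
  intro hi'
  have heven := hS.even_sum_card_inter h.involutive
    (fun j v hv hfix => h.mate_notMem j (σ j) v hv (hfix.symm ▸ hv))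
    (fun _ _ _ hv hv' => h.eq_of_mem hv hv') hS'
  have hsame : ∀ j ∈ (S ∩ S').erase i,
      #((e j (σ j)).toFinset ∩ (e j (τ j)).toFinset) = 2 := by
    intro j hj
    rw [hτ j (ne_of_mem_erase hj), inter_self,
      Sym2.card_toFinset_of_not_isDiag _ (h.not_isDiag j _)]
  have hswitch : #((e i (σ i)).toFinset ∩ (e i (τ i)).toFinset) = 1 :=
    h.card_inter_eq_one (h.ne_of_mem_mateClosed hS hi hτi.symm)
  rw [← add_sum_erase _ _ (mem_inter.2 ⟨hi, hi'⟩), hswitch, sum_congr rfl hsame, sum_const,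
    smul_eq_mul] at heven
  grind

theorem notMem_of_mateClosed_of_mate (h : EdgeChoice mate e) {σ : ι → Bool} {i r : ι} {v : α}
    {s : Bool} (hv : v ∈ select e σ i) (hvs : mate v ∈ e r s) (hvr : mate v ∉ select e σ r)
    {S : Finset ι} (hS : MateClosed mate (select e σ) S) : i ∉ S := by
  intro hi
  obtain ⟨j, -, hvj⟩ := hS i hi v hv
  obtain rfl := h.eq_of_mem hvj hvs
  exact hvr hvj

variable [Fintype ι]

/-- The number of indices on alternating cycles, summed over the selection `σ` and the opposite
selection; a selection minimizing it has no cycles. -/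
noncomputable def cyclicCount (mate : α → α) (e : ι → Bool → Sym2 α) (σ : ι → Bool) : ℕ :=
  #(cyclicIndices mate (select e σ)) + #(cyclicIndices mate (select e fun i => !σ i))

theorem cyclicCount_not (σ : ι → Bool) :
    cyclicCount mate e (fun i => !σ i) = cyclicCount mate e σ := by
  simp only [cyclicCount, Bool.not_not, add_comm]

theorem exists_cyclicCount_lt (h : EdgeChoice mate e) {σ : ι → Bool} {S : Finset ι}
    (hS : MateClosed mate (select e σ) S) (hne : S.Nonempty) :
    ∃ τ, cyclicCount mate e τ < cyclicCount mate e σ := by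
  classical
  obtain ⟨r, hr⟩ := hne
  obtain ⟨a, har, har'⟩ := exists_mem_notMem_of_ne (h.not_isDiag r (σ r))
    (h.ne_of_mem_mateClosed hS hr (Bool.not_ne_self (σ r)).symm)
  -- Switch the edge `i` next to `r` on the cycle: in the opposite selection the cycle is broken
  -- at `a`, which is no endpoint of a selected edge there.
  obtain ⟨i, hi, hai⟩ := hS r hr a har
  have hir : r ≠ i := by
    rintro rfl
    exact h.mate_notMem r _ a har hai
  set τ := Function.update σ i (!σ i)
  have hτ : ∀ j ≠ i, τ j = σ j := fun j hj => Function.update_of_ne hj _ _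
  have hτi : τ i = !σ i := Function.update_self _ _ _
  have hi_τ : i ∉ cyclicIndices mate (select e τ) := by
    rw [mem_cyclicIndices]
    rintro ⟨S', hS', hi'⟩
    exact h.notMem_of_mateClosed_switch hτ (by simp [hτi]) hS hS' hi hi'
  have hi_opp : i ∉ cyclicIndices mate (select e fun j => !τ j) := by
    rw [mem_cyclicIndices]
    rintro ⟨S', hS', hi'⟩
    refine h.notMem_of_mateClosed_of_mate (v := mate a) (r := r) (s := σ r) ?_ ?_ ?_ hS' hi'
    · simpa only [select, hτi, Bool.not_not] using hai
    · rwa [h.involutive a]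
    · simpa only [select, hτ r hir, h.involutive a] using har'
  have hi_σ : i ∈ cyclicIndices mate (select e σ) := mem_cyclicIndices.2 ⟨S, hS, hi⟩
  refine ⟨τ, add_lt_add_of_lt_of_le (card_lt_card ?_) (card_le_card ?_)⟩
  · refine Finset.ssubset_iff_subset_ne.2 ⟨cyclicIndices_subset_of_eq_off ?_ hi_τ, fun heq => ?_⟩
    · intro j hj
      rw [select, select, hτ j hj]
    · exact hi_τ (heq ▸ hi_σ)
  · refine cyclicIndices_subset_of_eq_off (fun j hj => ?_) hi_opp
    simp only [select, hτ j hj]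

omit [Fintype ι] in
theorem exists_alternatingAcyclic [Finite ι] (h : EdgeChoice mate e) :
    ∃ σ, AlternatingAcyclic mate (select e σ) ∧
      AlternatingAcyclic mate (select e fun i => !σ i) := by
  cases nonempty_fintype ι
  obtain ⟨σ, hσ⟩ := Finite.exists_min (cyclicCount mate e)
  have hacyclic : ∀ τ, cyclicCount mate e τ = cyclicCount mate e σ →
      AlternatingAcyclic mate (select e τ) := by
    intro τ hτ S hS
    by_contra hne
    obtain ⟨ρ, hρ⟩ := h.exists_cyclicCount_lt hS (nonempty_iff_ne_empty.2 hne)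
    exact (hσ ρ).not_gt (hτ ▸ hρ)
  exact ⟨σ, hacyclic σ rfl, hacyclic _ (cyclicCount_not σ)⟩

theorem exists_half (h : EdgeChoice mate e) {k : ℕ} (hcard : Fintype.card ι = 2 * k)
    (c : Sym2 α → ℝ) :
    ∃ (σ : ι → Bool) (S : Finset ι), #S = k ∧
      (S : Set ι).Pairwise (fun i j => MateApart mate (select e σ i) (select e σ j)) ∧
      1 / 4 * ∑ i, (c (e i true) + c (e i false)) ≤ ∑ i ∈ S, c (select e σ i) := by
  obtain ⟨σ, hσ, hσ'⟩ := h.exists_alternatingAcyclic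
  have hsum : ∑ i, (c (e i true) + c (e i false)) =
      ∑ i, c (select e σ i) + ∑ i, c (select e (fun j => !σ j) i) := by
    rw [← sum_add_distrib]
    refine sum_congr rfl fun i _ => ?_
    cases hi : σ i <;> simp [select, hi, add_comm]
  have half {τ : ι → Bool} (hτ : AlternatingAcyclic mate (select e τ)) :=
    hτ.exists_half h.involutive (fun _ _ _ hv hv' => h.eq_of_mem hv hv') hcard
      fun i => c (select e τ i)
  obtain ⟨S, hS, hS_apart, hS_le⟩ := half hσ
  obtain ⟨S', hS', hS'_apart, hS'_le⟩ := half hσ'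
  rcases le_total (∑ i, c (select e (fun j => !σ j) i)) (∑ i, c (select e σ i)) with hle | hle
  · exact ⟨σ, S, hS, hS_apart, by linarith⟩
  · exact ⟨_, S', hS', hS'_apart, by linarith⟩

end EdgeChoice

end EdgeChoices

section Paths

omit [Fintype V]

variable {M : Finset (Sym2 V)} {p : P3 V}

/-- Neither edge of the 3-path `p` lies in `M`, so that `P*_1` consists of the 3-paths of `P*`
avoiding `M`. -/
def P3.Avoids (M : Finset (Sym2 V)) (p : P3 V) : Prop := s(p.x, p.y) ∉ M ∧ s(p.y, p.z) ∉ M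

/-- The edges of a 3-path among which one outside the matching `M` is to be selected; they are the
same edge if one of the two edges lies in `M`. -/
def P3.choice (M : Finset (Sym2 V)) (p : P3 V) : Bool → Sym2 V
  | true => if s(p.x, p.y) ∈ M then s(p.y, p.z) else s(p.x, p.y)
  | false => if s(p.y, p.z) ∈ M then s(p.x, p.y) else s(p.y, p.z)

omit [DecidableEq V] in
theorem P3.edge_ne (p : P3 V) : s(p.x, p.y) ≠ s(p.y, p.z) := by
  rw [Sym2.eq_swap]
  exact fun h => p.hxz (Sym2.congr_right.1 h)

theorem P3.y_mem_of_mem_edges {f : Sym2 V} (hf : f ∈ p.edges) : p.y ∈ f := by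
  simp only [P3.edges, mem_insert, mem_singleton] at hf
  rcases hf with rfl | rfl <;> simp

theorem P3.mem_verts_of_mem_edges {f : Sym2 V} (hf : f ∈ p.edges) {v : V} (hv : v ∈ f) :
    v ∈ p.verts := by
  simp only [P3.edges, P3.verts, mem_insert, mem_singleton] at hf ⊢
  rcases hf with rfl | rfl <;> rw [Sym2.mem_iff] at hv <;> tauto

theorem P3.not_isDiag_of_mem_edges {f : Sym2 V} (hf : f ∈ p.edges) : ¬ f.IsDiag := by
  simp only [P3.edges, mem_insert, mem_singleton] at hf
  rcases hf with rfl | rfl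
  · exact p.hxy
  · exact p.hyz

theorem P3.choice_mem_edges (M : Finset (Sym2 V)) (p : P3 V) (s : Bool) :
    p.choice M s ∈ p.edges := by
  cases s <;> simp only [P3.choice, P3.edges] <;> split_ifs <;> simp

omit [DecidableEq V] in
theorem P3.notMem_of_mem (hM : IsMatching M) (hxy : s(p.x, p.y) ∈ M) : s(p.y, p.z) ∉ M :=
  fun hyz => hM.2 _ hxy _ hyz p.edge_ne p.y (by simp) (by simp)

theorem P3.choice_notMem (hM : IsMatching M) (p : P3 V) (s : Bool) : p.choice M s ∉ M := by
  have := P3.notMem_of_mem (p := p) hM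
  cases s <;> simp only [P3.choice] <;> split_ifs <;> tauto

theorem P3.not_avoids_of_choice_eq (h : p.choice M true = p.choice M false) : ¬ p.Avoids M := by
  rintro ⟨hxy, hyz⟩
  simp only [P3.choice, if_neg hxy, if_neg hyz] at h
  exact p.edge_ne h

theorem P3.exists_mem_of_not_avoids (h : ¬ p.Avoids M) : ∃ f ∈ p.edges, f ∈ M := by
  simp only [P3.edges, mem_insert, mem_singleton, exists_eq_or_imp, exists_eq_left]
  by_contra! hf
  exact h hf

theorem P3.edges_sdiff_of_avoids (h : p.Avoids M) : p.edges \ M = p.edges := by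
  obtain ⟨hxy, hyz⟩ := h
  rw [Finset.sdiff_eq_self_iff_disjoint, P3.edges, disjoint_insert_left, disjoint_singleton_left]
  exact ⟨hxy, hyz⟩

theorem P3.sum_choice_of_avoids (h : p.Avoids M) (c : Sym2 V → ℝ) :
    c (p.choice M true) + c (p.choice M false) = ∑ f ∈ p.edges \ M, c f := by
  rw [P3.edges_sdiff_of_avoids h, P3.edges, sum_pair p.edge_ne, P3.choice, P3.choice, if_neg h.1,
    if_neg h.2]

theorem P3.sum_choice_of_not_avoids (hM : IsMatching M) (h : ¬ p.Avoids M) (c : Sym2 V → ℝ) :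
    c (p.choice M true) + c (p.choice M false) = 2 * ∑ f ∈ p.edges \ M, c f := by
  by_cases hxy : s(p.x, p.y) ∈ M
  · have hyz := P3.notMem_of_mem hM hxy
    have hsdiff : p.edges \ M = {s(p.y, p.z)} := by
      rw [P3.edges, insert_sdiff_of_mem _ hxy,
        Finset.sdiff_eq_self_iff_disjoint.2 (disjoint_singleton_left.2 hyz)]
    rw [hsdiff, sum_singleton, two_mul, P3.choice, P3.choice, if_pos hxy, if_neg hyz]
  · have hyz : s(p.y, p.z) ∈ M := by
      by_contra hyz
      exact h ⟨hxy, hyz⟩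
    have hsdiff : p.edges \ M = {s(p.x, p.y)} := by
      rw [P3.edges, pair_comm, insert_sdiff_of_mem _ hyz,
        Finset.sdiff_eq_self_iff_disjoint.2 (disjoint_singleton_left.2 hxy)]
    rw [hsdiff, sum_singleton, two_mul, P3.choice, P3.choice, if_neg hxy, if_pos hyz]

end Paths

section Packings

variable {P : Finset (P3 V)} {M : Finset (Sym2 V)} {mate : V → V}

theorem IsPacking.eq_of_mem_verts (hP : IsPacking P) {p q : P3 V} (hp : p ∈ P) (hq : q ∈ P)
    {v : V} (hpv : v ∈ p.verts) (hqv : v ∈ q.verts) : p = q := by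
  by_contra hne
  exact disjoint_left.1 (hP.2.1 p hp q hq hne) hpv hqv

omit [DecidableEq V] in
theorem IsMatching.covered (hM : IsMatching M) (hcard : 2 * #M = Fintype.card V) (v : V) :
    covered M v := by
  classical
  have hcov : M.biUnion Sym2.toFinset = univ := by
    rw [← card_eq_iff_eq_univ, card_biUnion, ← hcard]
    · rw [sum_congr rfl fun f hf => Sym2.card_toFinset_of_not_isDiag f (hM.1 f hf), sum_const,
        smul_eq_mul, mul_comm]
    · intro f hf g hg hfg
      refine disjoint_left.2 fun v hvf hvg => ?_
      exact hM.2 f hf g hg hfg v (Sym2.mem_toFinset.1 hvf) (Sym2.mem_toFinset.1 hvg)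
  obtain ⟨f, hf, hvf⟩ := mem_biUnion.1 (hcov ▸ mem_univ v)
  exact ⟨f, hf, Sym2.mem_toFinset.1 hvf⟩

omit [Fintype V] [DecidableEq V] in
theorem IsMatching.exists_mate (hM : IsMatching M) (hcov : ∀ v, MW3PP.covered M v) :
    ∃ mate : V → V, Function.Involutive mate ∧ ∀ u v, s(u, v) ∈ M ↔ mate u = v := by
  have hex : ∀ v, ∃ u, s(v, u) ∈ M := by
    intro v
    obtain ⟨f, hf, u, rfl⟩ := hcov v
    exact ⟨u, hf⟩
  choose mate hmate using hex
  have hunique : ∀ u v, s(u, v) ∈ M → mate u = v := by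
    intro u v huv
    by_contra hne
    exact hM.2 _ (hmate u) _ huv (fun h => hne (Sym2.congr_right.1 h)) u (by simp) (by simp)
  refine ⟨mate, fun v => hunique _ _ ?_, fun u v => ⟨hunique u v, fun h => h ▸ hmate u⟩⟩
  rw [Sym2.eq_swap]
  exact hmate v

theorem IsPacking.edgeChoice (hP : IsPacking P) (hM : IsMatching M)
    (hinv : Function.Involutive mate) (hmate : ∀ u v, s(u, v) ∈ M ↔ mate u = v) :
    EdgeChoice mate fun p : P => p.1.choice M := by
  have hnot : ∀ (p : P) s, ∀ v ∈ p.1.choice M s, mate v ∉ p.1.choice M s := by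
    intro p s v hv hv'
    have hvM : s(v, mate v) ∈ M := (hmate v (mate v)).2 rfl
    have hne : v ≠ mate v := hM.1 _ hvM
    rw [← (Sym2.mem_and_mem_iff hne).1 ⟨hv, hv'⟩] at hvM
    exact P3.choice_notMem hM p.1 s hvM
  have hverts {p : P3 V} {s v} (hv : v ∈ p.choice M s) : v ∈ p.verts :=
    P3.mem_verts_of_mem_edges (p.choice_mem_edges M s) hv
  have hy (p : P) (s) : p.1.y ∈ p.1.choice M s :=
    P3.y_mem_of_mem_edges (p.1.choice_mem_edges M s)
  refine ⟨hinv, fun p s => P3.not_isDiag_of_mem_edges (p.1.choice_mem_edges M s), hnot,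
    fun p q s t v hp hq => Subtype.ext (hP.eq_of_mem_verts p.2 q.2 (hverts hp) (hverts hq)),
    fun p => ⟨p.1.y, hy p⟩, fun p heq => ⟨p.1.y, hy p, fun q s hq => ?_⟩⟩
  -- The edge of `M` at the middle vertex belongs to the path `p`.
  obtain ⟨f, hf, hfM⟩ := P3.exists_mem_of_not_avoids (P3.not_avoids_of_choice_eq heq)
  obtain ⟨u, rfl⟩ := P3.y_mem_of_mem_edges hf
  obtain rfl := (hmate _ _).1 hfM
  have hmem : mate p.1.y ∈ p.1.verts := P3.mem_verts_of_mem_edges hf (by simp)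
  obtain rfl : q = p := Subtype.ext (hP.eq_of_mem_verts q.2 p.2 (hverts hq) hmem)
  exact hnot q s _ (hy q s) hq

theorem IsPacking.sum_Esub_sdiff (hP : IsPacking P) {S : Finset (P3 V)} (hS : S ⊆ P)
    (M : Finset (Sym2 V)) (c : Sym2 V → ℝ) :
    ∑ f ∈ Esub S \ M, c f = ∑ p ∈ S, ∑ f ∈ p.edges \ M, c f := by
  have hdisj : (S : Set (P3 V)).PairwiseDisjoint fun p => p.edges \ M := by
    intro p hp q hq hpq
    refine disjoint_left.2 fun f hfp hfq => hpq ?_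
    have hyp := P3.y_mem_of_mem_edges (mem_sdiff.1 hfp).1
    exact hP.eq_of_mem_verts (hS hp) (hS hq) (P3.mem_verts_of_mem_edges (mem_sdiff.1 hfp).1 hyp)
      (P3.mem_verts_of_mem_edges (mem_sdiff.1 hfq).1 hyp)
  rw [← sum_biUnion hdisj]
  congr 1
  ext f
  simp only [Esub, mem_sdiff, mem_biUnion]
  tauto

omit [Fintype V] [DecidableEq V] in
theorem mem_psel {q : P3 V → Prop} {p : P3 V} : p ∈ psel P q ↔ p ∈ P ∧ q p :=
  mem_filter

omit [Fintype V] [DecidableEq V] in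
theorem psel_subset (P : Finset (P3 V)) (q : P3 V → Prop) : psel P q ⊆ P :=
  filter_subset q P

omit [Fintype V] [DecidableEq V] in
theorem sum_psel_add_sum_psel_not (P : Finset (P3 V)) (q : P3 V → Prop) (g : P3 V → ℝ) :
    ∑ p ∈ psel P q, g p + ∑ p ∈ psel P (fun p => ¬ q p), g p = ∑ p ∈ P, g p := by
  rw [psel, psel, ← sum_filter_add_sum_filter_not P q]
  congr!

omit [Fintype V] in
theorem Esub_psel_avoids_sdiff (P : Finset (P3 V)) (M : Finset (Sym2 V)) :
    Esub (psel P (P3.Avoids M)) \ M = Esub (psel P (P3.Avoids M)) := by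
  rw [Finset.sdiff_eq_self_iff_disjoint, Esub, disjoint_biUnion_left]
  intro p hp
  rw [← Finset.sdiff_eq_self_iff_disjoint, P3.edges_sdiff_of_avoids (mem_psel.1 hp).2]

theorem IsPacking.sum_Esub_sdiff_eq_add (hP : IsPacking P) (M : Finset (Sym2 V))
    (c : Sym2 V → ℝ) :
    ∑ f ∈ Esub P \ M, c f = ∑ f ∈ Esub (psel P (P3.Avoids M)), c f +
      ∑ f ∈ Esub (psel P fun p => ¬ p.Avoids M) \ M, c f := by
  rw [← Esub_psel_avoids_sdiff, hP.sum_Esub_sdiff Subset.rfl, hP.sum_Esub_sdiff (psel_subset P _),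
    hP.sum_Esub_sdiff (psel_subset P _), sum_psel_add_sum_psel_not]

theorem IsPacking.sum_choice (hP : IsPacking P) (hM : IsMatching M) (c : Sym2 V → ℝ) :
    ∑ p ∈ P, (c (p.choice M true) + c (p.choice M false)) =
      ∑ f ∈ Esub (psel P (P3.Avoids M)), c f +
        2 * ∑ f ∈ Esub (psel P fun p => ¬ p.Avoids M) \ M, c f := by
  rw [← Esub_psel_avoids_sdiff, hP.sum_Esub_sdiff (psel_subset P _),
    hP.sum_Esub_sdiff (psel_subset P _), mul_sum,
    ← sum_psel_add_sum_psel_not P (P3.Avoids M)]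
  exact congrArg₂ _ (sum_congr rfl fun p hp => P3.sum_choice_of_avoids (mem_psel.1 hp).2 c)
    (sum_congr rfl fun p hp => P3.sum_choice_of_not_avoids hM (mem_psel.1 hp).2 c)

omit [Fintype V] [DecidableEq V] in
theorem EdgeChoice.eq_of_shares {ι : Type*} {e : ι → Bool → Sym2 V} (h : EdgeChoice mate e)
    (hmate : ∀ u v, s(u, v) ∈ M ↔ mate u = v) {σ : ι → Bool} {S : Finset ι}
    (hS : (S : Set ι).Pairwise fun i j => MateApart mate (select e σ i) (select e σ j))
    {f : Sym2 V} (hf : f ∈ M) {i j : ι} (hi : i ∈ S) (hj : j ∈ S)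
    (hfi : shares f (select e σ i)) (hfj : shares f (select e σ j)) : i = j := by
  obtain ⟨u, huf, hu⟩ := hfi
  obtain ⟨v, hvf, hv⟩ := hfj
  by_contra hij
  rcases eq_or_ne u v with rfl | huv
  · exact hij (h.eq_of_mem hu hv)
  · obtain rfl := (Sym2.mem_and_mem_iff huv).1 ⟨huf, hvf⟩
    exact hS hi hj hij u hu (((hmate u v).1 hf).symm ▸ hv)

end Packings

theorem statement_3_general {P : Finset (P3 V)} (hP : IsPacking P) {M : Finset (Sym2 V)}
    (hM : IsMatching M) (h3 : 3 ∣ Fintype.card V) (hcard : 2 * #M = Fintype.card V)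
    (c : Sym2 V → ℝ) :
    (∃ N : Finset (Sym2 V), #N = Fintype.card V / 6 ∧ (∀ f ∈ N, ¬ f.IsDiag) ∧ (∀ f ∈ N, f ∉ M) ∧
      (∀ f ∈ M, ∀ g₁ ∈ N, ∀ g₂ ∈ N, shares f g₁ → shares f g₂ → g₁ = g₂) ∧
      1 / 4 * ∑ f ∈ Esub (psel P (P3.Avoids M)), c f +
        1 / 2 * ∑ f ∈ Esub (psel P fun p => ¬ p.Avoids M) \ M, c f ≤ ∑ f ∈ N, c f) ∧
    1 / 4 * ∑ f ∈ Esub (psel P (P3.Avoids M)), c f +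
        1 / 2 * ∑ f ∈ Esub (psel P fun p => ¬ p.Avoids M) \ M, c f =
      1 / 4 * ∑ f ∈ Esub P \ M, c f +
        1 / 4 * ∑ f ∈ Esub (psel P fun p => ¬ p.Avoids M) \ M, c f := by
  refine ⟨?_, by rw [hP.sum_Esub_sdiff_eq_add M c]; ring⟩
  obtain ⟨mate, hinv, hmate⟩ := hM.exists_mate (hM.covered hcard)
  have hchoice := hP.edgeChoice hM hinv hmate
  have hcardP : Fintype.card P = 2 * (Fintype.card V / 6) := by
    rw [Fintype.card_coe, hP.1]
    omega
  obtain ⟨σ, S, hS, hapart, hle⟩ := hchoice.exists_half hcardP c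
  have hinj := hchoice.select_injective σ
  refine ⟨S.image (select _ σ), by rw [card_image_of_injective S hinj, hS], ?_, ?_, ?_, ?_⟩
  · exact forall_mem_image.2 fun p _ => hchoice.not_isDiag p _
  · exact forall_mem_image.2 fun p _ => P3.choice_notMem hM p.1 _
  · simp only [forall_mem_image]
    exact fun f hf p hp q hq hfp hfq =>
      congrArg _ (hchoice.eq_of_shares hmate hapart hf hp hq hfp hfq)
  · rw [sum_image hinj.injOn]
    have hsum := hP.sum_choice hM c
    rw [← sum_coe_sort P] at hsum
    linarith

theorem statement_3 (n : ℕ) (hn : Fintype.card V = n) (h3 : 3 ∣ n) (h2 : 2 ∣ n)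
    (w : Sym2 V → ℝ) (hw : ∀ e : Sym2 V, 0 ≤ w e)
    (Pstar : Finset (P3 V)) (hP : IsMaxPacking w Pstar)
    (M : Finset (Sym2 V)) (hM : IsMatching M) (hMcard : M.card = n / 2) :
    (∃ N : Finset (Sym2 V), N.card = n / 6 ∧ (∀ e ∈ N, ¬ e.IsDiag) ∧ (∀ e ∈ N, e ∉ M) ∧
      (∀ f ∈ M, ∀ e₁ ∈ N, ∀ e₂ ∈ N, shares f e₁ → shares f e₂ → e₁ = e₂) ∧
      (1 / 4 : ℝ) * cw w M (Esub (psel Pstar fun p => s(p.x, p.y) ∉ M ∧ s(p.y, p.z) ∉ M)) +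
        (1 / 2 : ℝ) *
          cw w M (Esub (psel Pstar fun p => ¬(s(p.x, p.y) ∉ M ∧ s(p.y, p.z) ∉ M)) \ M) ≤
        cw w M N) ∧
    (1 / 4 : ℝ) * cw w M (Esub (psel Pstar fun p => s(p.x, p.y) ∉ M ∧ s(p.y, p.z) ∉ M)) +
      (1 / 2 : ℝ) *
        cw w M (Esub (psel Pstar fun p => ¬(s(p.x, p.y) ∉ M ∧ s(p.y, p.z) ∉ M)) \ M) =
      (1 / 4 : ℝ) * cw w M (Esub Pstar \ M) +
      (1 / 4 : ℝ) *
        cw w M (Esub (psel Pstar fun p => ¬(s(p.x, p.y) ∉ M ∧ s(p.y, p.z) ∉ M)) \ M) := by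
  subst hn
  exact statement_3_general hP.1 hM h3 (by omega) (cost w M)

end MW3PP
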